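/- Right composition for E-separation: for every directed graph G = (V, E_d) and all subsets A, B, C ⊆ V, (A, B, C) ∈ I_E^G if and only if (A, {b}, C) ∈ I_E^G for every b ∈ B. -/

import Mathlib

namespace ESepPaper

/-- A directed mixed graph: directed edges and bidirected edges over a node type `V`.
A directed graph (DG) is a DMG with `Ebi = ∅`. -/
structure DMG (V : Type) where
  Ed : Set (V × V)
  Ebi : Set (Sym2 V)

variable {V : Type}

/-- `G.ancestor u v` : there is a directed path `u → … → v` (possibly trivial). -/
def DMG.ancestor (G : DMG V) : V → V → Prop :=
  Relation.ReflTransGen (fun u v => (u, v) ∈ G.Ed)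

/-- Ancestors of a set `C`. -/
def DMG.anc (G : DMG V) (C : Set V) : Set V := {u | ∃ v ∈ C, G.ancestor u v}

/-- Strongly connected component of `v`. -/
def DMG.scc (G : DMG V) (v : V) : Set V := {w | G.ancestor w v ∧ G.ancestor v w}

/-- Parents of a set of nodes. -/
def DMG.pa (G : DMG V) (S : Set V) : Set V := {w | ∃ v ∈ S, (w, v) ∈ G.Ed}

/-- Kind of a traversed edge on a walk: forward directed, backward directed, or bidirected. -/
inductive LinkType | fwd | bwd | bi
deriving DecidableEq

/-- Validity of a link of kind `t` between consecutive walk nodes `u` and `v`. -/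
def DMG.linkOK (G : DMG V) (u v : V) : LinkType → Prop
  | .fwd => (u, v) ∈ G.Ed
  | .bwd => (v, u) ∈ G.Ed
  | .bi => s(u, v) ∈ G.Ebi

/-- Arrowhead at the second (right) endpoint of the link. -/
def LinkType.headR : LinkType → Prop
  | .fwd => True
  | .bwd => False
  | .bi => True

/-- Arrowhead at the first (left) endpoint of the link. -/
def LinkType.headL : LinkType → Prop
  | .fwd => False
  | .bwd => True
  | .bi => True

/-- Tail at the second (right) endpoint. -/
def LinkType.tailR (t : LinkType) : Prop := t = .bwd

/-- Tail at the first (left) endpoint. -/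
def LinkType.tailL (t : LinkType) : Prop := t = .fwd

/-- Walks in a DMG. -/
inductive DMG.Walk (G : DMG V) : V → V → Type
  | nil (v : V) : DMG.Walk G v v
  | cons {u v w : V} (t : LinkType) (h : G.linkOK u v t) (p : DMG.Walk G v w) : DMG.Walk G u w

/-- An interior node on a walk, whose incoming link is `t1` and outgoing link is `t2`,
is a collider iff both links have an arrowhead at it. -/
def colliderAt (t1 t2 : LinkType) : Prop := t1.headR ∧ t2.headL

/-- An interior non-collider `v` between neighbours `u` (incoming link `t1`) and `w`
(outgoing link `t2`) is unblockable: on every side where the link has a tail at `v`, the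
corresponding neighbour lies in `scc_G(v)` (left-chain/right-chain/fork cases). -/
def unblockableAt (G : DMG V) (u v w : V) (t1 t2 : LinkType) : Prop :=
  (t1.tailR → u ∈ G.scc v) ∧ (t2.tailL → w ∈ G.scc v)

namespace DMG.Walk

variable {G : DMG V}

/-- First node of a walk. -/
def first {a b : V} (_ : G.Walk a b) : V := a

def length : {a b : V} → G.Walk a b → ℕ
  | _, _, .nil _ => 0
  | _, _, .cons _ _ p => p.length + 1

def support : {a b : V} → G.Walk a b → List V
  | a, _, .nil _ => [a]
  | a, _, .cons _ _ p => a :: p.support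

/-- Auxiliary: σ-openness of the remainder of a walk, where `u` is the previous node and
`t1` the link from `u` into the current first node. -/
def sigmaOpenAux (C : Set V) : (u : V) → LinkType → {b c : V} → G.Walk b c → Prop
  | _, _, _, _, .nil _ => True
  | u, t1, v, _, .cons t2 _ q =>
      ((colliderAt t1 t2 → v ∈ G.anc C) ∧
       (¬ colliderAt t1 t2 → ¬ unblockableAt G u v q.first t1 t2 → v ∉ C)) ∧
      sigmaOpenAux C v t2 q

/-- The walk is σ-open given `C`: every collider on it is an ancestor of a node of `C`, and
no blockable non-collider on it lies in `C`. -/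
def sigmaOpen (C : Set V) : {a b : V} → G.Walk a b → Prop
  | _, _, .nil _ => True
  | a, _, .cons t _ q => sigmaOpenAux C a t q

/-- All links are forward directed. -/
def IsDirected : {a b : V} → G.Walk a b → Prop
  | _, _, .nil _ => True
  | _, _, .cons t _ p => t = .fwd ∧ p.IsDirected

/-- Interior nodes of the walk (all nodes except the two endpoints). -/
def interior {a b : V} (p : G.Walk a b) : List V := p.support.tail.dropLast

/-- Arrowhead at the first endpoint. -/
def headAtStart : {a b : V} → G.Walk a b → Prop
  | _, _, .nil _ => False
  | _, _, .cons t _ _ => t.headL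

def headAtEndAux : LinkType → {a b : V} → G.Walk a b → Prop
  | t, _, _, .nil _ => t.headR
  | _, _, _, .cons t _ q => headAtEndAux t q

/-- Arrowhead at the last endpoint. -/
def headAtEnd : {a b : V} → G.Walk a b → Prop
  | _, _, .nil _ => False
  | _, _, .cons t _ q => headAtEndAux t q

def noCollidersAux : LinkType → {a b : V} → G.Walk a b → Prop
  | _, _, _, .nil _ => True
  | t1, _, _, .cons t2 _ q => ¬ colliderAt t1 t2 ∧ noCollidersAux t2 q

/-- There is no collider on the walk. -/
def NoColliders : {a b : V} → G.Walk a b → Prop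
  | _, _, .nil _ => True
  | _, _, .cons t _ q => noCollidersAux t q

def collidersInAux (S : Set V) : LinkType → {a b : V} → G.Walk a b → Prop
  | _, _, _, .nil _ => True
  | t1, v, _, .cons t2 _ q => (colliderAt t1 t2 → v ∈ S) ∧ collidersInAux S t2 q

/-- Every collider on the walk lies in `S`. -/
def CollidersIn (S : Set V) : {a b : V} → G.Walk a b → Prop
  | _, _, .nil _ => True
  | _, _, .cons t _ q => collidersInAux S t q

def noncollUnblAux : (u : V) → LinkType → {b c : V} → G.Walk b c → Prop
  | _, _, _, _, .nil _ => True
  | u, t1, v, _, .cons t2 _ q =>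
      (¬ colliderAt t1 t2 → unblockableAt G u v q.first t1 t2) ∧ noncollUnblAux v t2 q

/-- Every interior non-collider on the walk is unblockable. -/
def NoncollidersUnblockable : {a b : V} → G.Walk a b → Prop
  | _, _, .nil _ => True
  | a, _, .cons t _ q => noncollUnblAux a t q

/-- The set of edges occurring on a walk (directed edges as ordered pairs in `E_d`,
bidirected edges as unordered pairs). -/
def edges : {a b : V} → G.Walk a b → Set ((V × V) ⊕ Sym2 V)
  | _, _, .nil _ => ∅
  | a, _, .cons t _ p =>
      insert (match t with
        | .fwd => Sum.inl (a, p.first)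
        | .bwd => Sum.inl (p.first, a)
        | .bi => Sum.inr s(a, p.first)) p.edges

/-- Concatenation of walks. -/
def append : {a b c : V} → G.Walk a b → G.Walk b c → G.Walk a c
  | _, _, _, .nil _, q => q
  | _, _, _, .cons t h p, q => .cons t h (p.append q)

/-- A walk `v_0, …, v_{n+1}` is a path if no node besides the final endpoint occurs more
than once, i.e. `v_0, …, v_n` are pairwise distinct. -/
def IsPath {a b : V} (p : G.Walk a b) : Prop := p.support.dropLast.Nodup

end DMG.Walk

/-- `A` is σ-separated from `B` given `C` in `G`: every walk from a node of `A` to a node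
of `B` is σ-blocked given `C`. -/
def DMG.sigmaSep (G : DMG V) (A B C : Set V) : Prop :=
  ∀ a ∈ A, ∀ b ∈ B, ∀ p : G.Walk a b, ¬ p.sigmaOpen C

/-- The lifted dependency graph of `G`, on two copies of `V`
(`Sum.inl` is the past copy `V_0`, `Sum.inr` the future copy `V_1`). -/
def DMG.lift (G : DMG V) : DMG (V ⊕ V) where
  Ed := {e | ∃ u v, (u, v) ∈ G.Ed ∧
        (e = (Sum.inl u, Sum.inl v) ∨ e = (Sum.inl u, Sum.inr v) ∨
         e = (Sum.inr u, Sum.inr v))}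
  Ebi := {e | ∃ u v, s(u, v) ∈ G.Ebi ∧
        (e = s(Sum.inl u, Sum.inl v) ∨ e = s(Sum.inl u, Sum.inr v) ∨
         e = s(Sum.inr u, Sum.inl v) ∨ e = s(Sum.inr u, Sum.inr v))}

/-- `B` is E-separated from `A` given `C` in `G`:
`A_0` is σ-separated from `B_1` given `C_0 ∪ (C_1 \ B_1)` in the lifted dependency graph. -/
def DMG.ESep (G : DMG V) (A B C : Set V) : Prop :=
  G.lift.sigmaSep (Sum.inl '' A) (Sum.inr '' B)
    ((Sum.inl '' C) ∪ ((Sum.inr '' C) \ (Sum.inr '' B)))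

/-- The independence model `I_E^G` of E-separation triples. -/
def DMG.IE (G : DMG V) : Set (Set V × Set V × Set V) :=
  {t | G.ESep t.1 t.2.1 t.2.2}


/-- The latent projection of `G` onto the observed nodes `O`: a directed edge when there is
a non-trivial directed walk whose interior nodes are all latent, and a bidirected edge when
there is a non-trivial collider-free walk with arrowheads at both endpoints whose interior
nodes are all latent. -/
def DMG.latentProj (G : DMG V) (O : Set V) : DMG O where
  Ed := {e | ∃ p : G.Walk e.1.val e.2.val,
          p.IsDirected ∧ 0 < p.length ∧ ∀ x ∈ p.interior, x ∉ O}
  Ebi := {e | ∃ u v : O, e = s(u, v) ∧ ∃ p : G.Walk u.val v.val,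
          p.headAtStart ∧ p.headAtEnd ∧ p.NoColliders ∧ 0 < p.length ∧
          ∀ x ∈ p.interior, x ∉ O}

/-- The last edge of the walk `p` before entering `scc_G(w)` has an arrowhead at its
endpoint in `scc_G(w)` (vacuous if the walk never leaves `scc_G(w)`). -/
def DMG.lastEdgeInto (G : DMG V) {a b : V} (w : V) (p : G.Walk a b) : Prop :=
  (∀ x ∈ p.support, x ∈ G.scc w) ∨
  ∃ (x y : V) (t : LinkType) (h : G.linkOK x y t) (p₁ : G.Walk a x) (p₂ : G.Walk y b),
    p = p₁.append (.cons t h p₂) ∧ x ∉ G.scc w ∧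
    (∀ z ∈ p₂.support, z ∈ G.scc w) ∧ t.headR

/-- An (asymmetric) inducing path from `v` to `w`: a non-trivial path such that every
collider on it is an ancestor of `v` or `w`, every interior non-collider is unblockable,
and the last edge before entering `scc_G(w)` points into `scc_G(w)`. -/
def DMG.IsInducingPath (G : DMG V) {v w : V} (p : G.Walk v w) : Prop :=
  0 < p.length ∧ p.IsPath ∧
  p.CollidersIn (G.anc {v, w}) ∧ p.NoncollidersUnblockable ∧ G.lastEdgeInto w p

/-!
A σ-open walk ending in `S` can be adapted to a change of the conditioning set, provided the change
only involves nodes of `S` and the walk may end elsewhere in `S`. If nodes of `S` are added, stop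
the walk at its first visit to `S` after the start: no interior node of what is left lies in `S`. If
nodes of `S` are removed, stop at the first collider that is no longer an ancestor of the
conditioning set, and follow a directed path from it to one of the removed nodes: no node of that
path is in the conditioning set. E-separation of `B` conditions on `(C₀ ∪ C₁) \ B₁`, and passing
from `B` to one of its singletons changes this set only within `B₁`.
-/

namespace DMG

theorem subset_anc (G : DMG V) (C : Set V) : C ⊆ G.anc C :=
  fun v hv => ⟨v, hv, Relation.ReflTransGen.refl⟩

theorem anc_mono (G : DMG V) {C D : Set V} (h : C ⊆ D) : G.anc C ⊆ G.anc D :=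
  fun _ ⟨v, hv, huv⟩ => ⟨v, h hv, huv⟩

theorem mem_anc_of_edge {G : DMG V} {C : Set V} {u v : V} (huv : (u, v) ∈ G.Ed)
    (hv : v ∈ G.anc C) : u ∈ G.anc C :=
  let ⟨c, hc, hvc⟩ := hv
  ⟨c, hc, Relation.ReflTransGen.head huv hvc⟩

theorem exists_sigmaOpenAux_of_ancestor {G : DMG V} {C : Set V} {v w : V} (hvw : G.ancestor v w)
    (hv : v ∉ G.anc C) : ∃ q : G.Walk v w, ∀ u t, q.sigmaOpenAux C u t := by
  induction hvw using Relation.ReflTransGen.head_induction_on with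
  | refl => exact ⟨.nil _, fun _ _ => trivial⟩
  | head hvx _ ih =>
    obtain ⟨q, hq⟩ := ih fun hx => hv (mem_anc_of_edge hvx hx)
    exact ⟨.cons .fwd hvx q, fun _ _ =>
      ⟨⟨fun hcol => hcol.2.elim, fun _ _ hvC => hv (G.subset_anc C hvC)⟩, hq _ _⟩⟩

namespace Walk

variable {G : DMG V} {C D S : Set V}

theorem sigmaOpenAux.exists_sigmaOpenAux_of_subset {v w : V} {p : G.Walk v w} (hw : w ∈ S) {u : V}
    {t : LinkType} (hp : p.sigmaOpenAux C u t) :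
    ∃ s ∈ S, ∃ q : G.Walk v s, ∀ D, C ⊆ D → D ⊆ C ∪ S → q.sigmaOpenAux D u t := by
  induction p generalizing u t with
  | nil v => exact ⟨v, hw, .nil v, fun _ _ _ => trivial⟩
  | @cons v _ _ t' h p ih =>
    obtain ⟨⟨collider_mem, noncollider_notMem⟩, hp⟩ := hp
    by_cases hvS : v ∈ S
    · exact ⟨v, hvS, .nil v, fun _ _ _ => trivial⟩
    · obtain ⟨s, hs, q, hq⟩ := ih hw hp
      refine ⟨s, hs, .cons t' h q, fun D hCD hDC => ⟨⟨fun hcol => ?_, fun hcol hunbl hvD => ?_⟩,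
        hq D hCD hDC⟩⟩
      · exact G.anc_mono hCD (collider_mem hcol)
      · exact (hDC hvD).elim (noncollider_notMem hcol hunbl) hvS

theorem sigmaOpen.exists_sigmaOpen_of_subset {a b : V} {p : G.Walk a b} (hb : b ∈ S)
    (hp : p.sigmaOpen C) :
    ∃ s ∈ S, ∃ q : G.Walk a s, ∀ D, C ⊆ D → D ⊆ C ∪ S → q.sigmaOpen D := by
  cases p with
  | nil => exact ⟨a, hb, .nil a, fun _ _ _ => trivial⟩
  | cons t h p =>
    obtain ⟨s, hs, q, hq⟩ := sigmaOpenAux.exists_sigmaOpenAux_of_subset hb hp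
    exact ⟨s, hs, .cons t h q, hq⟩

theorem sigmaOpenAux.exists_sigmaOpenAux_of_superset (hDC : D ⊆ C) (hCD : C ⊆ D ∪ S) {v w : V}
    {p : G.Walk v w} (hw : w ∈ S) {u : V} {t : LinkType} (hp : p.sigmaOpenAux C u t) :
    ∃ s ∈ S, ∃ q : G.Walk v s, q.sigmaOpenAux D u t := by
  induction p generalizing u t with
  | nil v => exact ⟨v, hw, .nil v, trivial⟩
  | @cons v _ _ t' h p ih =>
    obtain ⟨⟨collider_mem, noncollider_notMem⟩, hp⟩ := hp
    by_cases hv : colliderAt t t' → v ∈ G.anc D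
    · obtain ⟨s, hs, q, hq⟩ := ih hw hp
      exact ⟨s, hs, .cons t' h q,
        ⟨hv, fun hcol hunbl hvD => noncollider_notMem hcol hunbl (hDC hvD)⟩, hq⟩
    · obtain ⟨hcol, hvD⟩ := Classical.not_imp.mp hv
      obtain ⟨s, hsC, hvs⟩ := collider_mem hcol
      have hsS : s ∈ S := (hCD hsC).resolve_left fun hsD => hvD ⟨s, hsD, hvs⟩
      obtain ⟨q, hq⟩ := exists_sigmaOpenAux_of_ancestor hvs hvD
      exact ⟨s, hsS, q, hq u t⟩

theorem sigmaOpen.exists_sigmaOpen_of_superset (hDC : D ⊆ C) (hCD : C ⊆ D ∪ S) {a b : V}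
    {p : G.Walk a b} (hb : b ∈ S) (hp : p.sigmaOpen C) :
    ∃ s ∈ S, ∃ q : G.Walk a s, q.sigmaOpen D := by
  cases p with
  | nil => exact ⟨a, hb, .nil a, trivial⟩
  | cons t h p =>
    obtain ⟨s, hs, q, hq⟩ := sigmaOpenAux.exists_sigmaOpenAux_of_superset hDC hCD hb hp
    exact ⟨s, hs, .cons t h q, hq⟩

end Walk

theorem sigmaSep_sdiff_iff_forall_singleton (G : DMG V) (A S X : Set V) :
    G.sigmaSep A S (X \ S) ↔ ∀ s ∈ S, G.sigmaSep A {s} (X \ {s}) := by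
  have sdiff_subset {s : V} (hs : s ∈ S) : X \ S ⊆ X \ {s} :=
    Set.sdiff_subset_sdiff_right (Set.singleton_subset_iff.mpr hs)
  have subset_union (s : V) : X \ {s} ⊆ X \ S ∪ S := by
    rw [Set.sdiff_union_self]
    exact Set.sdiff_subset.trans Set.subset_union_left
  constructor
  · rintro hsep s hs a ha _ rfl p hp
    obtain ⟨r, hr, q, hq⟩ := hp.exists_sigmaOpen_of_superset (sdiff_subset hs) (subset_union _) hs
    exact hsep a ha r hr q hq
  · intro hsep a ha b hb p hp
    obtain ⟨s, hs, q, hq⟩ := hp.exists_sigmaOpen_of_subset hb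
    exact hsep s hs a ha s rfl q (hq _ (sdiff_subset hs) (subset_union s))

theorem ESep_iff_sigmaSep_sdiff (G : DMG V) (A B C : Set V) :
    G.ESep A B C ↔ G.lift.sigmaSep (Sum.inl '' A) (Sum.inr '' B)
      ((Sum.inl '' C ∪ Sum.inr '' C) \ Sum.inr '' B) := by
  rw [ESep, Set.union_sdiff_distrib, Set.disjoint_image_inl_image_inr.sdiff_eq_left]

end DMG

theorem right_composition_general (G : DMG V) (A B C : Set V) :
    (A, B, C) ∈ G.IE ↔ ∀ b ∈ B, (A, ({b} : Set V), C) ∈ G.IE := by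
  change G.ESep A B C ↔ ∀ b ∈ B, G.ESep A {b} C
  simp only [DMG.ESep_iff_sigmaSep_sdiff, Set.image_singleton]
  rw [DMG.sigmaSep_sdiff_iff_forall_singleton, Set.forall_mem_image]

/-- Right composition (RCo) for E-separation. -/
theorem right_composition {V : Type} [Fintype V] (G : DMG V) (hG : G.Ebi = ∅)
    (A B C : Set V) :
    (A, B, C) ∈ G.IE ↔ ∀ b ∈ B, (A, ({b} : Set V), C) ∈ G.IE :=
  right_composition_general G A B C

end ESepPaper
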